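/- Let A₁ and A₂ be complex Banach algebras and let φ : A₁ → A₂ be a retraction, i.e., a continuous algebra homomorphism for which there exists a continuous algebra homomorphism ψ : A₂ → A₁ with φ∘ψ equal to the identity on A₂. If A₁ is weakly amenable, then A₂ is weakly amenable. -/

import Mathlib

/-- `D : A → A*` (a continuous linear map into the dual) is a *derivation* when
`D(ab) = D(a)·b + a·D(b)`, where `A*` is an `A`-bimodule via `(F·a)(x) = F(ax)` and
`(a·F)(x) = F(xa)`; pairing against `x : A` gives the condition below. -/
def IsDerivation {A : Type*} [NonUnitalNormedRing A] [NormedSpace ℂ A]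
    (D : A →L[ℂ] (A →L[ℂ] ℂ)) : Prop :=
  ∀ a b x : A, D (a * b) x = D a (b * x) + D b (x * a)

/-- A map `D : A → A*` is *cyclic* when `⟨D(a), b⟩ + ⟨D(b), a⟩ = 0` for all `a, b`. -/
def IsCyclicMap {A : Type*} [NonUnitalNormedRing A] [NormedSpace ℂ A]
    (D : A →L[ℂ] (A →L[ℂ] ℂ)) : Prop :=
  ∀ a b : A, D a b + D b a = 0

/-- `D : A → A*` is *inner* if `D = ad_F` for some `F ∈ A*`, where
`ad_F(a) = F·a - a·F`, i.e. `⟨ad_F(a), x⟩ = F(ax) - F(xa)`. -/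
def IsInnerDerivation {A : Type*} [NonUnitalNormedRing A] [NormedSpace ℂ A]
    (D : A →L[ℂ] (A →L[ℂ] ℂ)) : Prop :=
  ∃ F : A →L[ℂ] ℂ, ∀ a x : A, D a x = F (a * x) - F (x * a)

/-- A Banach algebra `A` is *cyclically weakly amenable* if every continuous derivation
from `A` into `A*` is cyclic. -/
def CyclicallyWeaklyAmenable (A : Type*) [NonUnitalNormedRing A] [NormedSpace ℂ A] : Prop :=
  ∀ D : A →L[ℂ] (A →L[ℂ] ℂ), IsDerivation D → IsCyclicMap D

/-- A Banach algebra `A` is *weakly amenable* if every continuous derivation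
from `A` into `A*` is inner. -/
def WeaklyAmenable (A : Type*) [NonUnitalNormedRing A] [NormedSpace ℂ A] : Prop :=
  ∀ D : A →L[ℂ] (A →L[ℂ] ℂ), IsDerivation D → IsInnerDerivation D

/-- A Banach algebra `A` is *cyclically amenable* if every continuous cyclic derivation
from `A` into `A*` is inner. -/
def CyclicallyAmenable (A : Type*) [NonUnitalNormedRing A] [NormedSpace ℂ A] : Prop :=
  ∀ D : A →L[ℂ] (A →L[ℂ] ℂ), IsDerivation D → IsCyclicMap D → IsInnerDerivation D

section Pullback

variable {A B : Type*} [NonUnitalNormedRing A] [NormedSpace ℂ A]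
  [NonUnitalNormedRing B] [NormedSpace ℂ B] {D : B →L[ℂ] (B →L[ℂ] ℂ)}

theorem IsDerivation.bilinearComp (hD : IsDerivation D) (f : A →L[ℂ] B)
    (hf : ∀ a b : A, f (a * b) = f a * f b) : IsDerivation (D.bilinearComp f f) := by
  intro a b x
  simpa only [ContinuousLinearMap.bilinearComp_apply, hf] using hD (f a) (f b) (f x)

theorem IsInnerDerivation.bilinearComp (hD : IsInnerDerivation D) (f : A →L[ℂ] B)
    (hf : ∀ a b : A, f (a * b) = f a * f b) : IsInnerDerivation (D.bilinearComp f f) := by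
  obtain ⟨F, hF⟩ := hD
  refine ⟨F.comp f, fun a x => ?_⟩
  simpa only [ContinuousLinearMap.bilinearComp_apply, ContinuousLinearMap.comp_apply, hf]
    using hF (f a) (f x)

end Pullback

theorem weaklyAmenable_of_retraction_general {A₁ A₂ : Type*}
    [NonUnitalNormedRing A₁] [NormedSpace ℂ A₁] [NonUnitalNormedRing A₂] [NormedSpace ℂ A₂]
    (φ : A₁ →L[ℂ] A₂) (hφmul : ∀ a b : A₁, φ (a * b) = φ a * φ b)
    (ψ : A₂ →L[ℂ] A₁) (hψmul : ∀ a b : A₂, ψ (a * b) = ψ a * ψ b)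
    (hφψ : ∀ a : A₂, φ (ψ a) = a)
    (h : WeaklyAmenable A₁) :
    WeaklyAmenable A₂ := by
  intro D hD
  have pullback_inner : IsInnerDerivation (D.bilinearComp φ φ) := h _ (hD.bilinearComp φ hφmul)
  have pullback_pullback : (D.bilinearComp φ φ).bilinearComp ψ ψ = D := by
    ext a x
    simp only [ContinuousLinearMap.bilinearComp_apply, hφψ]
  exact pullback_pullback ▸ pullback_inner.bilinearComp ψ hψmul

/-- If `φ : A₁ → A₂` is a retraction of complex Banach algebras (a continuous algebra
homomorphism admitting a continuous algebra homomorphism `ψ : A₂ → A₁` with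
`φ ∘ ψ = id`), and `A₁` is weakly amenable, then so is `A₂`. -/
theorem weaklyAmenable_of_retraction {A₁ A₂ : Type*}
    [NonUnitalNormedRing A₁] [NormedSpace ℂ A₁] [IsScalarTower ℂ A₁ A₁]
    [SMulCommClass ℂ A₁ A₁] [CompleteSpace A₁]
    [NonUnitalNormedRing A₂] [NormedSpace ℂ A₂] [IsScalarTower ℂ A₂ A₂]
    [SMulCommClass ℂ A₂ A₂] [CompleteSpace A₂]
    (φ : A₁ →L[ℂ] A₂) (hφmul : ∀ a b : A₁, φ (a * b) = φ a * φ b)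
    (ψ : A₂ →L[ℂ] A₁) (hψmul : ∀ a b : A₂, ψ (a * b) = ψ a * ψ b)
    (hφψ : ∀ a : A₂, φ (ψ a) = a)
    (h : WeaklyAmenable A₁) :
    WeaklyAmenable A₂ :=
  weaklyAmenable_of_retraction_general φ hφmul ψ hψmul hφψ h
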